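/- Let p, u : ℝ² → ℝ and let (t,x) be a point with t > 0, x > 0 and p(t,x) > 0. Assume p and u are differentiable at (t,x) and satisfy at (t,x) the radially symmetric ultra-relativistic Euler equations: ∂/∂t (x²·p·(3+4u²)) + ∂/∂x (4·x²·p·u·√(1+u²)) = 0 and ∂/∂t (4·x²·p·u·√(1+u²)) + ∂/∂x (x²·p·(1+4u²)) = 2·x·p. Then the entropy conservation law also holds at (t,x): ∂/∂t (x²·p^{3/4}·√(1+u²)) + ∂/∂x (x²·p^{3/4}·u) = 0. -/

import Mathlib

/-!
The entropy law is the combination `√(1 + u²) · (energy) - u · (momentum)` of the Euler equations,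
divided by four times the temperature `p ^ (1/4)`. On differentials this is the Gibbs relation,
valid separately for the densities and for the fluxes. The remaining terms, which come from the
derivative of the cross-sectional area, cancel against the geometric source term of the momentum
equation; this works for any area function in place of `x²`.
-/

namespace UltraRelativisticEuler

/-- The energy density of the ultra-relativistic gas: the component `T⁰⁰` of the energy-momentum
tensor with rest energy density `3 p`, so that `T⁰⁰ = 4 p (1 + u ^ 2) - p`. -/
def energyDensity (p u : ℝ) : ℝ := p * (3 + 4 * u ^ 2)

/-- The component `T⁰¹` of the energy-momentum tensor, serving both as momentum density and as
energy flux. -/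
noncomputable def momentumDensity (p u : ℝ) : ℝ := 4 * p * u * √(1 + u ^ 2)

/-- The component `T¹¹` of the energy-momentum tensor: the flux of momentum. -/
def momentumFlux (p u : ℝ) : ℝ := p * (1 + 4 * u ^ 2)

/-- The entropy density: the proper density `p ^ (3/4)` times the Lorentz factor `√(1 + u ^ 2)`. -/
noncomputable def entropyDensity (p u : ℝ) : ℝ := p ^ ((3 : ℝ) / 4) * √(1 + u ^ 2)

/-- The entropy flux: the proper density `p ^ (3/4)` transported with four-velocity `u`. -/
noncomputable def entropyFlux (p u : ℝ) : ℝ := p ^ ((3 : ℝ) / 4) * u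

theorem sq_sqrt_one_add_sq (u : ℝ) : √(1 + u ^ 2) ^ 2 = 1 + u ^ 2 :=
  Real.sq_sqrt (by positivity)

theorem rpow_one_fourth_mul_rpow_three_fourths {p : ℝ} (hp : 0 < p) :
    p ^ ((1 : ℝ) / 4) * p ^ ((3 : ℝ) / 4) = p := by
  rw [← Real.rpow_add hp]
  norm_num

section Derivatives

variable {p u : ℝ → ℝ} {p' u' s : ℝ}

theorem hasDerivAt_sqrt_one_add_sq (hu : HasDerivAt u u' s) :
    HasDerivAt (fun r => √(1 + u r ^ 2)) (u s * u' / √(1 + u s ^ 2)) s := by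
  refine (((hu.fun_pow 2).const_add 1).sqrt (by positivity)).congr_deriv ?_
  field

theorem hasDerivAt_rpow_three_fourths (hp : HasDerivAt p p' s) (hps : 0 < p s) :
    HasDerivAt (fun r => p r ^ ((3 : ℝ) / 4)) (3 / 4 * p' / p s ^ ((1 : ℝ) / 4)) s := by
  refine (hp.rpow_const (Or.inl hps.ne')).congr_deriv ?_
  rw [show (3 : ℝ) / 4 - 1 = -(1 / 4) by norm_num, Real.rpow_neg hps.le]
  ring

theorem hasDerivAt_energyDensity (hp : HasDerivAt p p' s) (hu : HasDerivAt u u' s) :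
    HasDerivAt (fun r => energyDensity (p r) (u r))
      (p' * (3 + 4 * u s ^ 2) + 8 * p s * u s * u') s := by
  refine (hp.fun_mul (((hu.fun_pow 2).const_mul 4).const_add 3)).congr_deriv ?_
  ring

theorem hasDerivAt_momentumFlux (hp : HasDerivAt p p' s) (hu : HasDerivAt u u' s) :
    HasDerivAt (fun r => momentumFlux (p r) (u r))
      (p' * (1 + 4 * u s ^ 2) + 8 * p s * u s * u') s := by
  refine (hp.fun_mul (((hu.fun_pow 2).const_mul 4).const_add 1)).congr_deriv ?_
  ring

theorem hasDerivAt_momentumDensity (hp : HasDerivAt p p' s) (hu : HasDerivAt u u' s) :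
    HasDerivAt (fun r => momentumDensity (p r) (u r))
      (4 * (p' * u s + p s * u') * √(1 + u s ^ 2)
        + 4 * p s * u s * (u s * u' / √(1 + u s ^ 2))) s := by
  refine (((hp.const_mul 4).fun_mul hu).fun_mul (hasDerivAt_sqrt_one_add_sq hu)).congr_deriv ?_
  ring

theorem hasDerivAt_entropyDensity (hp : HasDerivAt p p' s) (hu : HasDerivAt u u' s)
    (hps : 0 < p s) :
    HasDerivAt (fun r => entropyDensity (p r) (u r))
      (3 / 4 * p' / p s ^ ((1 : ℝ) / 4) * √(1 + u s ^ 2)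
        + p s ^ ((3 : ℝ) / 4) * (u s * u' / √(1 + u s ^ 2))) s :=
  (hasDerivAt_rpow_three_fourths hp hps).fun_mul (hasDerivAt_sqrt_one_add_sq hu)

theorem hasDerivAt_entropyFlux (hp : HasDerivAt p p' s) (hu : HasDerivAt u u' s) (hps : 0 < p s) :
    HasDerivAt (fun r => entropyFlux (p r) (u r))
      (3 / 4 * p' / p s ^ ((1 : ℝ) / 4) * u s + p s ^ ((3 : ℝ) / 4) * u') s :=
  (hasDerivAt_rpow_three_fourths hp hps).fun_mul hu

theorem gibbs_relation_density (hp : DifferentiableAt ℝ p s) (hu : DifferentiableAt ℝ u s)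
    (hps : 0 < p s) :
    √(1 + u s ^ 2) * deriv (fun r => energyDensity (p r) (u r)) s
        - u s * deriv (fun r => momentumDensity (p r) (u r)) s
      = 4 * p s ^ ((1 : ℝ) / 4) * deriv (fun r => entropyDensity (p r) (u r)) s := by
  rw [(hasDerivAt_energyDensity hp.hasDerivAt hu.hasDerivAt).deriv,
    (hasDerivAt_momentumDensity hp.hasDerivAt hu.hasDerivAt).deriv,
    (hasDerivAt_entropyDensity hp.hasDerivAt hu.hasDerivAt hps).deriv]
  field_simp
  linear_combination 4 * p s * u s * deriv u s * sq_sqrt_one_add_sq (u s)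
    - 4 * u s * deriv u s * rpow_one_fourth_mul_rpow_three_fourths hps

theorem gibbs_relation_flux (hp : DifferentiableAt ℝ p s) (hu : DifferentiableAt ℝ u s)
    (hps : 0 < p s) :
    √(1 + u s ^ 2) * deriv (fun r => momentumDensity (p r) (u r)) s
        - u s * deriv (fun r => momentumFlux (p r) (u r)) s
      = 4 * p s ^ ((1 : ℝ) / 4) * deriv (fun r => entropyFlux (p r) (u r)) s := by
  rw [(hasDerivAt_momentumDensity hp.hasDerivAt hu.hasDerivAt).deriv,
    (hasDerivAt_momentumFlux hp.hasDerivAt hu.hasDerivAt).deriv,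
    (hasDerivAt_entropyFlux hp.hasDerivAt hu.hasDerivAt hps).deriv]
  field_simp
  linear_combination
    4 * (deriv p s * u s + p s * deriv u s) * sq_sqrt_one_add_sq (u s)
    - 4 * deriv u s * rpow_one_fourth_mul_rpow_three_fourths hps

end Derivatives

theorem sqrt_mul_momentumDensity_sub_mul_momentumFlux {p : ℝ} (hp : 0 < p) (u : ℝ) :
    √(1 + u ^ 2) * momentumDensity p u - u * (momentumFlux p u - p)
      = 4 * p ^ ((1 : ℝ) / 4) * entropyFlux p u := by
  unfold momentumDensity momentumFlux entropyFlux
  linear_combination 4 * p * u * sq_sqrt_one_add_sq u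
    - 4 * u * rpow_one_fourth_mul_rpow_three_fourths hp

theorem gibbs_relation_weighted_density {p u : ℝ → ℝ} {t : ℝ} (c : ℝ)
    (hp : DifferentiableAt ℝ p t) (hu : DifferentiableAt ℝ u t) (hpt : 0 < p t) :
    √(1 + u t ^ 2) * deriv (fun s => c * energyDensity (p s) (u s)) t
        - u t * deriv (fun s => c * momentumDensity (p s) (u s)) t
      = 4 * p t ^ ((1 : ℝ) / 4) * deriv (fun s => c * entropyDensity (p s) (u s)) t := by
  simp only [deriv_const_mul_field]
  linear_combination c * gibbs_relation_density hp hu hpt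

theorem gibbs_relation_weighted_flux {a p u : ℝ → ℝ} {a' x : ℝ} (ha : HasDerivAt a a' x)
    (hp : DifferentiableAt ℝ p x) (hu : DifferentiableAt ℝ u x) (hpx : 0 < p x) :
    √(1 + u x ^ 2) * deriv (fun y => a y * momentumDensity (p y) (u y)) x
        - u x * (deriv (fun y => a y * momentumFlux (p y) (u y)) x - a' * p x)
      = 4 * p x ^ ((1 : ℝ) / 4) * deriv (fun y => a y * entropyFlux (p y) (u y)) x := by
  have hm := (hasDerivAt_momentumDensity hp.hasDerivAt hu.hasDerivAt).differentiableAt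
  have hσ := (hasDerivAt_momentumFlux hp.hasDerivAt hu.hasDerivAt).differentiableAt
  have hf := (hasDerivAt_entropyFlux hp.hasDerivAt hu.hasDerivAt hpx).differentiableAt
  rw [deriv_fun_mul ha.differentiableAt hm, deriv_fun_mul ha.differentiableAt hσ,
    deriv_fun_mul ha.differentiableAt hf, ha.deriv]
  linear_combination a x * gibbs_relation_flux hp hu hpx
    + a' * sqrt_mul_momentumDensity_sub_mul_momentumFlux hpx (u x)

end UltraRelativisticEuler

open UltraRelativisticEuler in
/-- The Euler equations in a duct of cross-sectional area `a`; the powers `a y = y ^ (d - 1)` give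
the radially symmetric flows in dimension `d`. -/
theorem stmt_19_general (p u : ℝ × ℝ → ℝ) (a : ℝ → ℝ) (a' t x : ℝ) (ha : HasDerivAt a a' x)
    (hp : 0 < p (t, x))
    (hpt : DifferentiableAt ℝ (fun s => p (s, x)) t)
    (hpx : DifferentiableAt ℝ (fun y => p (t, y)) x)
    (hut : DifferentiableAt ℝ (fun s => u (s, x)) t)
    (hux : DifferentiableAt ℝ (fun y => u (t, y)) x)
    (energy : deriv (fun s => a x * p (s, x) * (3 + 4 * u (s, x) ^ 2)) t
      + deriv (fun y => 4 * a y * p (t, y) * u (t, y) * √(1 + u (t, y) ^ 2)) x = 0)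
    (momentum : deriv (fun s => 4 * a x * p (s, x) * u (s, x) * √(1 + u (s, x) ^ 2)) t
      + deriv (fun y => a y * p (t, y) * (1 + 4 * u (t, y) ^ 2)) x = a' * p (t, x)) :
    deriv (fun s => a x * p (s, x) ^ ((3 : ℝ) / 4) * √(1 + u (s, x) ^ 2)) t
      + deriv (fun y => a y * p (t, y) ^ ((3 : ℝ) / 4) * u (t, y)) x = 0 := by
  have density := gibbs_relation_weighted_density (a x) hpt hut hp
  have flux := gibbs_relation_weighted_flux ha hpx hux hp
  have temperature_pos : 0 < 4 * p (t, x) ^ ((1 : ℝ) / 4) := by positivity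
  refine (mul_eq_zero_iff_left temperature_pos.ne').mp ?_
  simp only [energyDensity, momentumDensity, momentumFlux, entropyDensity, entropyFlux,
    mul_assoc, mul_left_comm (4 : ℝ)] at density flux energy momentum ⊢
  linear_combination √(1 + u (t, x) ^ 2) * energy - u (t, x) * momentum - density - flux

/-- Remark 2.3(2): at any point of differentiability where the radially symmetric
ultra-relativistic Euler equations hold, the additional entropy conservation law
`∂ₜ(x² p^{3/4}√(1+u²)) + ∂ₓ(x² p^{3/4} u) = 0` also holds. -/
theorem stmt_19 (p u : ℝ × ℝ → ℝ) (t x : ℝ) (ht : 0 < t) (hx : 0 < x)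
    (hp0 : 0 < p (t, x))
    (hpd : DifferentiableAt ℝ p (t, x)) (hud : DifferentiableAt ℝ u (t, x))
    (heq1 : deriv (fun s => x ^ 2 * p (s, x) * (3 + 4 * u (s, x) ^ 2)) t
      + deriv (fun y => 4 * y ^ 2 * p (t, y) * u (t, y) * Real.sqrt (1 + u (t, y) ^ 2)) x = 0)
    (heq2 : deriv (fun s => 4 * x ^ 2 * p (s, x) * u (s, x) * Real.sqrt (1 + u (s, x) ^ 2)) t
      + deriv (fun y => y ^ 2 * p (t, y) * (1 + 4 * u (t, y) ^ 2)) x = 2 * x * p (t, x)) :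
    deriv (fun s => x ^ 2 * p (s, x) ^ ((3 : ℝ) / 4) * Real.sqrt (1 + u (s, x) ^ 2)) t
      + deriv (fun y => y ^ 2 * p (t, y) ^ ((3 : ℝ) / 4) * u (t, y)) x = 0 := by
  exact stmt_19_general p u (fun y => y ^ 2) (2 * x) t x (by simpa using hasDerivAt_pow 2 x) hp0
    (by fun_prop) (by fun_prop) (by fun_prop) (by fun_prop) heq1 heq2
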